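/- arXiv:1806.06264 — 5 statements merged into one kernel-verified Lean document; each statement's English description precedes it below -/
import Mathlib

section
/- Let p be a real number with 1 < p < 3/2, let ξ : [0,∞) → [0,∞) be nonincreasing, and let g : [0,∞) → [0,∞) be differentiable with g′(s) ≤ −ξ(s) g(s)^p for all s ≥ 0 and ∫_0^∞ g(s)^{1/2} ds < ∞. Let M > 0 and let h : [0,∞) × [0,∞) → [0,∞) be measurable with h(t,s) ≤ M for all t, s. Then there exists a constant k₀ > 0 such that for all t ≥ 0: ξ(t) ∫_0^t g(t−s) h(t,s) ds ≤ k₀ ( ∫_0^t (−g′(t−s)) h(t,s) ds )^{1/(2p−1)}. -/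
open MeasureTheory Set

/-! The kernel `g` is interpolated between its powers `g ^ σ` and `g ^ p` by Hölder's inequality
with respect to the measure `ξ t * h t s ds`. The first factor is bounded uniformly in `t`, since
`g ^ σ` is integrable on `[0, ∞)`. As `ξ` is nonincreasing, `ξ t * g (t - s) ^ p ≤ -g' (t - s)`, and
this controls the second factor. For `σ = 1 / 2` the second Hölder exponent is `1 / (2 * p - 1)`. -/

section Interpolation

variable {α : Type*} [MeasurableSpace α] {μ : Measure α} {a b : ℝ}

theorem integral_rpow_mul_rpow_le {u v : α → ℝ} (ha : 0 ≤ a) (hb : 0 ≤ b) (hab : a + b = 1)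
    (hu : Integrable u μ) (hv : Integrable v μ) (hu₀ : 0 ≤ᵐ[μ] u) (hv₀ : 0 ≤ᵐ[μ] v) :
    ∫ x, u x ^ a * v x ^ b ∂μ ≤ (∫ x, u x ∂μ) ^ a * (∫ x, v x ∂μ) ^ b := by
  have hu_meas := hu.aestronglyMeasurable.aemeasurable
  have hv_meas := hv.aestronglyMeasurable.aemeasurable
  calc
    ∫ x, u x ^ a * v x ^ b ∂μ
        = (∫⁻ x, ENNReal.ofReal (u x) ^ a * ENNReal.ofReal (v x) ^ b ∂μ).toReal := by
      rw [integral_eq_lintegral_of_nonneg_ae]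
      · congr 1
        refine lintegral_congr_ae ?_
        filter_upwards [hu₀, hv₀] with x hux hvx
        rw [ENNReal.ofReal_mul (Real.rpow_nonneg hux a), ENNReal.ofReal_rpow_of_nonneg hux ha,
          ENNReal.ofReal_rpow_of_nonneg hvx hb]
      · filter_upwards [hu₀, hv₀] with x hux hvx
        exact mul_nonneg (Real.rpow_nonneg hux a) (Real.rpow_nonneg hvx b)
      · exact ((hu_meas.pow_const a).mul (hv_meas.pow_const b)).aestronglyMeasurable
    _ ≤ ((∫⁻ x, ENNReal.ofReal (u x) ∂μ) ^ a * (∫⁻ x, ENNReal.ofReal (v x) ∂μ) ^ b).toReal :=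
      ENNReal.toReal_mono
        (ENNReal.mul_ne_top (ENNReal.rpow_ne_top_of_nonneg ha hu.lintegral_lt_top.ne)
          (ENNReal.rpow_ne_top_of_nonneg hb hv.lintegral_lt_top.ne))
        (ENNReal.lintegral_mul_norm_pow_le hu_meas.ennreal_ofReal hv_meas.ennreal_ofReal ha hb hab)
    _ = (∫ x, u x ∂μ) ^ a * (∫ x, v x ∂μ) ^ b := by
      rw [ENNReal.toReal_mul, ← ENNReal.toReal_rpow, ← ENNReal.toReal_rpow,
        integral_eq_lintegral_of_nonneg_ae hu₀ hu.aestronglyMeasurable,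
        integral_eq_lintegral_of_nonneg_ae hv₀ hv.aestronglyMeasurable]

theorem weighted_rpow_interpolation {σ p x y : ℝ} (hab : a + b = 1) (hσp : σ * a + p * b = 1)
    (hx : 0 ≤ x) (hy : 0 ≤ y) : (x ^ σ * y) ^ a * (x ^ p * y) ^ b = x * y := by
  calc
    (x ^ σ * y) ^ a * (x ^ p * y) ^ b = (x ^ (σ * a) * x ^ (p * b)) * (y ^ a * y ^ b) := by
      rw [Real.mul_rpow (Real.rpow_nonneg hx σ) hy, Real.mul_rpow (Real.rpow_nonneg hx p) hy,
        ← Real.rpow_mul hx, ← Real.rpow_mul hx]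
      ring
    _ = x * y := by
      rw [← Real.rpow_add' hx (hσp ▸ one_ne_zero), ← Real.rpow_add' hy (hab ▸ one_ne_zero), hσp,
        hab, Real.rpow_one, Real.rpow_one]

theorem integral_mul_le_integral_rpow_mul_rpow {σ p : ℝ} {f w : α → ℝ} (ha : 0 ≤ a) (hb : 0 ≤ b)
    (hab : a + b = 1) (hσp : σ * a + p * b = 1) (hf : 0 ≤ᵐ[μ] f) (hw : 0 ≤ᵐ[μ] w)
    (hfσ : Integrable (fun x ↦ f x ^ σ * w x) μ) (hfp : Integrable (fun x ↦ f x ^ p * w x) μ) :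
    ∫ x, f x * w x ∂μ ≤ (∫ x, f x ^ σ * w x ∂μ) ^ a * (∫ x, f x ^ p * w x ∂μ) ^ b := by
  have hnonneg (r : ℝ) : 0 ≤ᵐ[μ] fun x ↦ f x ^ r * w x := by
    filter_upwards [hf, hw] with x hfx hwx using mul_nonneg (Real.rpow_nonneg hfx r) hwx
  have hsplit : (fun x ↦ f x * w x) =ᵐ[μ] fun x ↦ (f x ^ σ * w x) ^ a * (f x ^ p * w x) ^ b := by
    filter_upwards [hf, hw] with x hfx hwx
    exact (weighted_rpow_interpolation hab hσp hfx hwx).symm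
  rw [integral_congr_ae hsplit]
  exact integral_rpow_mul_rpow_le ha hb hab hfσ hfp (hnonneg σ) (hnonneg p)

end Interpolation

section MemoryIntegral

variable {φ g d w : ℝ → ℝ} {M t a b σ p : ℝ}

theorem intervalIntegrable_comp_sub_left_mul (hφ : IntervalIntegrable φ volume 0 t)
    (hw : Measurable w) (hwM : ∀ s, |w s| ≤ M) :
    IntervalIntegrable (fun s ↦ φ (t - s) * w s) volume 0 t := by
  have hreflect : IntervalIntegrable (fun s ↦ φ (t - s)) volume 0 t := by
    simpa only [sub_zero, sub_self] using (hφ.comp_sub_left t).symm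
  rw [intervalIntegrable_iff] at hreflect ⊢
  exact hreflect.mul_bdd hw.aestronglyMeasurable (.of_forall hwM)

theorem integral_comp_sub_left_mul_le (ht : 0 ≤ t) (hφ : ∀ s, 0 ≤ s → 0 ≤ φ s)
    (hφ_int : IntegrableOn φ (Ici 0)) (hw : ∀ s, 0 ≤ w s) (hwM : ∀ s, w s ≤ M) :
    ∫ s in 0..t, φ (t - s) * w s ≤ (∫ s in Ici 0, φ s) * M := by
  have hφ_t : IntervalIntegrable φ volume 0 t :=
    (hφ_int.mono_set (uIcc_of_le ht ▸ Icc_subset_Ici_self)).intervalIntegrable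
  have hφ_sub : ∀ s ∈ Ioc 0 t, 0 ≤ φ (t - s) := fun s hs ↦ hφ _ (sub_nonneg.2 hs.2)
  calc
    ∫ s in 0..t, φ (t - s) * w s ≤ ∫ s in 0..t, φ (t - s) * M := by
      rw [intervalIntegral.integral_of_le ht, intervalIntegral.integral_of_le ht]
      refine integral_mono_of_nonneg
        (ae_restrict_of_forall_mem measurableSet_Ioc fun s hs ↦ mul_nonneg (hφ_sub s hs) (hw s))
        ?_ (ae_restrict_of_forall_mem measurableSet_Ioc fun s hs ↦
          mul_le_mul_of_nonneg_left (hwM s) (hφ_sub s hs))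
      exact (intervalIntegrable_comp_sub_left_mul hφ_t measurable_const fun _ ↦ le_rfl).1
    _ = (∫ s in Ioc 0 t, φ s) * M := by
      rw [intervalIntegral.integral_mul_const, intervalIntegral.integral_comp_sub_left φ t,
        sub_self, sub_zero, intervalIntegral.integral_of_le ht]
    _ ≤ (∫ s in Ici 0, φ s) * M :=
      mul_le_mul_of_nonneg_right
        (setIntegral_mono_set hφ_int (ae_restrict_of_forall_mem measurableSet_Ici hφ)
          (Ioc_subset_Ioi_self.trans Ioi_subset_Ici_self).eventuallyLE)
        ((hw 0).trans (hwM 0))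

theorem integral_comp_sub_left_mul_le_rpow_mul_rpow (ha : 0 ≤ a) (hb : 0 ≤ b) (hab : a + b = 1)
    (hσp : σ * a + p * b = 1) (ht : 0 ≤ t) (hg : ∀ s, 0 ≤ s → 0 ≤ g s)
    (hgσ : IntervalIntegrable (fun s ↦ g s ^ σ) volume 0 t)
    (hgp : IntervalIntegrable (fun s ↦ g s ^ p) volume 0 t)
    (hw_meas : Measurable w) (hw : ∀ s, 0 ≤ w s) (hwM : ∀ s, w s ≤ M) :
    ∫ s in 0..t, g (t - s) * w s ≤
      (∫ s in 0..t, g (t - s) ^ σ * w s) ^ a * (∫ s in 0..t, g (t - s) ^ p * w s) ^ b := by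
  have hw_abs (s : ℝ) : |w s| ≤ M := (abs_of_nonneg (hw s)).trans_le (hwM s)
  simp only [intervalIntegral.integral_of_le ht]
  exact integral_mul_le_integral_rpow_mul_rpow ha hb hab hσp
    (ae_restrict_of_forall_mem measurableSet_Ioc fun s hs ↦ hg _ (sub_nonneg.2 hs.2))
    (.of_forall hw) (intervalIntegrable_comp_sub_left_mul hgσ hw_meas hw_abs).1
    (intervalIntegrable_comp_sub_left_mul hgp hw_meas hw_abs).1

theorem mul_integral_comp_sub_left_mul_le_of_mul_rpow_le {c : ℝ} (ha : 0 ≤ a) (hb : 0 ≤ b)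
    (hab : a + b = 1) (hσp : σ * a + p * b = 1) (hc : 0 ≤ c) (ht : 0 ≤ t)
    (hg : ∀ s, 0 ≤ s → 0 ≤ g s) (hgσ : IntegrableOn (fun s ↦ g s ^ σ) (Ici 0))
    (hgp : IntervalIntegrable (fun s ↦ g s ^ p) volume 0 t) (hd : IntervalIntegrable d volume 0 t)
    (hgd : ∀ s ∈ Icc 0 t, c * g s ^ p ≤ d s)
    (hw_meas : Measurable w) (hw : ∀ s, 0 ≤ w s) (hwM : ∀ s, w s ≤ M) :
    c * ∫ s in 0..t, g (t - s) * w s ≤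
      ((∫ s in Ici 0, g s ^ σ) * (c * M)) ^ a * (∫ s in 0..t, d (t - s) * w s) ^ b := by
  have hcw (s : ℝ) : 0 ≤ c * w s := mul_nonneg hc (hw s)
  have hcwM (s : ℝ) : c * w s ≤ c * M := mul_le_mul_of_nonneg_left (hwM s) hc
  have hw_abs (s : ℝ) : |w s| ≤ M := (abs_of_nonneg (hw s)).trans_le (hwM s)
  have hcw_abs (s : ℝ) : |c * w s| ≤ c * M := (abs_of_nonneg (hcw s)).trans_le (hcwM s)
  have hgσ_t : IntervalIntegrable (fun s ↦ g s ^ σ) volume 0 t :=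
    (hgσ.mono_set (uIcc_of_le ht ▸ Icc_subset_Ici_self)).intervalIntegrable
  have hmoment_nonneg (r : ℝ) : 0 ≤ ∫ s in 0..t, g (t - s) ^ r * (c * w s) :=
    intervalIntegral.integral_nonneg ht fun s hs ↦
      mul_nonneg (Real.rpow_nonneg (hg _ (sub_nonneg.2 hs.2)) r) (hcw s)
  have hσ_moment : ∫ s in 0..t, g (t - s) ^ σ * (c * w s) ≤ (∫ s in Ici 0, g s ^ σ) * (c * M) :=
    integral_comp_sub_left_mul_le ht (fun s hs ↦ Real.rpow_nonneg (hg s hs) σ) hgσ hcw hcwM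
  have hp_moment : ∫ s in 0..t, g (t - s) ^ p * (c * w s) ≤ ∫ s in 0..t, d (t - s) * w s := by
    refine intervalIntegral.integral_mono_on ht
      (intervalIntegrable_comp_sub_left_mul hgp (hw_meas.const_mul c) hcw_abs)
      (intervalIntegrable_comp_sub_left_mul hd hw_meas hw_abs) fun s hs ↦ ?_
    rw [← mul_assoc, mul_comm (g (t - s) ^ p)]
    exact mul_le_mul_of_nonneg_right
      (hgd _ ⟨sub_nonneg.2 hs.2, sub_le_self t hs.1⟩) (hw s)
  calc
    c * ∫ s in 0..t, g (t - s) * w s = ∫ s in 0..t, g (t - s) * (c * w s) := by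
      simp only [← intervalIntegral.integral_const_mul, mul_left_comm]
    _ ≤ (∫ s in 0..t, g (t - s) ^ σ * (c * w s)) ^ a *
          (∫ s in 0..t, g (t - s) ^ p * (c * w s)) ^ b :=
      integral_comp_sub_left_mul_le_rpow_mul_rpow ha hb hab hσp ht hg hgσ_t hgp
        (hw_meas.const_mul c) hcw hcwM
    _ ≤ _ :=
      mul_le_mul (Real.rpow_le_rpow (hmoment_nonneg σ) hσ_moment ha)
        (Real.rpow_le_rpow (hmoment_nonneg p) hp_moment hb)
        (Real.rpow_nonneg (hmoment_nonneg p) b)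
        (Real.rpow_nonneg ((hmoment_nonneg σ).trans hσ_moment) a)

theorem intervalIntegrable_neg_deriv_of_nonpos {g' : ℝ → ℝ} (hab : a ≤ b)
    (hg_deriv : ∀ s, a ≤ s → HasDerivWithinAt g (g' s) (Ici a) s)
    (hg' : ∀ s ∈ Ioo a b, g' s ≤ 0) : IntervalIntegrable (fun s ↦ -g' s) volume a b := by
  have hcont : ContinuousOn g (Icc a b) := fun s hs ↦
    (hg_deriv s hs.1).continuousWithinAt.mono Icc_subset_Ici_self
  rw [intervalIntegrable_iff_integrableOn_Ioc_of_le hab]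
  exact intervalIntegral.integrableOn_deriv_of_nonneg hcont.neg
    (fun s hs ↦ ((hg_deriv s hs.1.le).hasDerivAt (Ici_mem_nhds hs.1)).neg)
    fun s hs ↦ neg_nonneg.2 (hg' s hs)

theorem mul_integral_comp_sub_left_mul_le_of_mul_rpow_le_neg_deriv {g' : ℝ → ℝ} {c : ℝ}
    (hσ : σ < 1) (hp : 1 ≤ p) (hc : 0 ≤ c) (ht : 0 ≤ t) (hg : ∀ s, 0 ≤ s → 0 ≤ g s)
    (hg_deriv : ∀ s, 0 ≤ s → HasDerivWithinAt g (g' s) (Ici 0) s)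
    (hg_decay : ∀ s ∈ Icc 0 t, c * g s ^ p ≤ -g' s)
    (hgσ : IntegrableOn (fun s ↦ g s ^ σ) (Ici 0))
    (hw_meas : Measurable w) (hw : ∀ s, 0 ≤ w s) (hwM : ∀ s, w s ≤ M) :
    c * ∫ s in 0..t, g (t - s) * w s ≤
      ((∫ s in Ici 0, g s ^ σ) * (c * M)) ^ ((p - 1) / (p - σ)) *
        (∫ s in 0..t, -g' (t - s) * w s) ^ ((1 - σ) / (p - σ)) := by
  have hpσ : 0 < p - σ := by linarith
  have hgp : IntervalIntegrable (fun s ↦ g s ^ p) volume 0 t :=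
    ContinuousOn.intervalIntegrable_of_Icc ht fun s hs ↦
      ((hg_deriv s hs.1).continuousWithinAt.mono Icc_subset_Ici_self).rpow_const
        (.inr (by linarith))
  have hg'_nonpos (s : ℝ) (hs : s ∈ Ioo 0 t) : g' s ≤ 0 :=
    neg_nonneg.1 <| (mul_nonneg hc (Real.rpow_nonneg (hg s hs.1.le) p)).trans
      (hg_decay s (Ioo_subset_Icc_self hs))
  exact mul_integral_comp_sub_left_mul_le_of_mul_rpow_le
    (div_nonneg (by linarith) hpσ.le) (div_nonneg (by linarith) hpσ.le)
    (by field_simp; ring) (by field_simp; ring) hc ht hg hgσ hgp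
    (intervalIntegrable_neg_deriv_of_nonpos ht hg_deriv hg'_nonpos) hg_decay hw_meas hw hwM

end MemoryIntegral

theorem memory_integral_estimate_p_gt_one_general
    {σ p : ℝ} (hσ : σ ∈ Ioo 0 1) (hp : 1 ≤ p) {ξ g g' : ℝ → ℝ}
    (hξ_nonneg : ∀ s, 0 ≤ s → 0 ≤ ξ s) (hξ_mono : AntitoneOn ξ (Ici 0))
    (hg_nonneg : ∀ s, 0 ≤ s → 0 ≤ g s)
    (hg_deriv : ∀ s, 0 ≤ s → HasDerivWithinAt g (g' s) (Ici 0) s)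
    (hg_decay : ∀ s, 0 ≤ s → g' s ≤ -ξ s * g s ^ p)
    (hg_int : IntegrableOn (fun s ↦ g s ^ σ) (Ici 0)) {M : ℝ} {h : ℝ → ℝ → ℝ}
    (hh_meas : ∀ t, Measurable (h t)) (hh_nonneg : ∀ t s, 0 ≤ h t s) (hh_bdd : ∀ t s, h t s ≤ M) :
    ∃ k₀ > 0, ∀ t, 0 ≤ t →
      ξ t * ∫ s in (0 : ℝ)..t, g (t - s) * h t s ≤
        k₀ * (∫ s in (0 : ℝ)..t, -g' (t - s) * h t s) ^ ((1 - σ) / (p - σ)) := by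
  have hG : 0 ≤ ∫ s in Ici 0, g s ^ σ :=
    setIntegral_nonneg measurableSet_Ici fun s hs ↦ Real.rpow_nonneg (hg_nonneg s hs) σ
  have hM : 0 ≤ M := (hh_nonneg 0 0).trans (hh_bdd 0 0)
  have hξ₀ : 0 ≤ ξ 0 := hξ_nonneg 0 le_rfl
  refine ⟨((∫ s in Ici 0, g s ^ σ) * (ξ 0 * M)) ^ ((p - 1) / (p - σ)) + 1, by positivity,
    fun t ht ↦ ?_⟩
  have hξt : 0 ≤ ξ t := hξ_nonneg t ht
  have hξ_le : ξ t ≤ ξ 0 := hξ_mono self_mem_Ici ht ht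
  have hdecay (s : ℝ) (hs : s ∈ Icc 0 t) : ξ t * g s ^ p ≤ -g' s :=
    calc
      ξ t * g s ^ p ≤ ξ s * g s ^ p :=
        mul_le_mul_of_nonneg_right (hξ_mono hs.1 ht hs.2) (Real.rpow_nonneg (hg_nonneg s hs.1) p)
      _ ≤ -g' s := by linarith [hg_decay s hs.1]
  have hD : 0 ≤ ∫ s in 0..t, -g' (t - s) * h t s :=
    intervalIntegral.integral_nonneg ht fun s hs ↦ mul_nonneg
      ((mul_nonneg hξt (Real.rpow_nonneg (hg_nonneg _ (sub_nonneg.2 hs.2)) p)).trans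
        (hdecay _ ⟨sub_nonneg.2 hs.2, sub_le_self t hs.1⟩))
      (hh_nonneg t s)
  calc
    ξ t * ∫ s in 0..t, g (t - s) * h t s
        ≤ ((∫ s in Ici 0, g s ^ σ) * (ξ t * M)) ^ ((p - 1) / (p - σ)) *
            (∫ s in 0..t, -g' (t - s) * h t s) ^ ((1 - σ) / (p - σ)) :=
      mul_integral_comp_sub_left_mul_le_of_mul_rpow_le_neg_deriv hσ.2 hp hξt ht
        hg_nonneg hg_deriv hdecay hg_int (hh_meas t) (hh_nonneg t) (hh_bdd t)
    _ ≤ ((∫ s in Ici 0, g s ^ σ) * (ξ 0 * M)) ^ ((p - 1) / (p - σ)) *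
          (∫ s in 0..t, -g' (t - s) * h t s) ^ ((1 - σ) / (p - σ)) := by
      have ha : 0 ≤ (p - 1) / (p - σ) := div_nonneg (by linarith) (by linarith [hσ.2])
      gcongr
    _ ≤ _ := mul_le_mul_of_nonneg_right (le_add_of_nonneg_right zero_le_one)
      (Real.rpow_nonneg hD _)

/-- Abstract analytic content of Lemma 2.1 in the case `p > 1`. -/
theorem memory_integral_estimate_p_gt_one
    (p : ℝ) (hp₁ : 1 < p) (hp₂ : p < 3 / 2)
    (ξ g g' : ℝ → ℝ)
    (hξ_nonneg : ∀ s, 0 ≤ s → 0 ≤ ξ s)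
    (hξ_mono : AntitoneOn ξ (Ici 0))
    (hg_nonneg : ∀ s, 0 ≤ s → 0 ≤ g s)
    (hg_deriv : ∀ s, 0 ≤ s → HasDerivAt g (g' s) s)
    (hg_decay : ∀ s, 0 ≤ s → g' s ≤ -ξ s * g s ^ p)
    (hg_int : IntegrableOn (fun s => g s ^ ((1 : ℝ) / 2)) (Ici 0))
    (M : ℝ) (hM : 0 < M)
    (h : ℝ → ℝ → ℝ)
    (hh_meas : Measurable (Function.uncurry h))
    (hh_nonneg : ∀ t s, 0 ≤ h t s)
    (hh_bdd : ∀ t s, h t s ≤ M) :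
    ∃ k₀ > 0, ∀ t, 0 ≤ t →
      ξ t * ∫ s in (0 : ℝ)..t, g (t - s) * h t s ≤
        k₀ * (∫ s in (0 : ℝ)..t, -g' (t - s) * h t s) ^ (1 / (2 * p - 1)) := by
  have hexp : 1 / (2 * p - 1) = (1 - 1 / 2) / (p - 1 / 2) := by grind
  exact hexp ▸ memory_integral_estimate_p_gt_one_general (by norm_num) hp₁.le
    hξ_nonneg hξ_mono hg_nonneg (fun s hs ↦ (hg_deriv s hs).hasDerivWithinAt) hg_decay hg_int
    (fun _ ↦ hh_meas.of_uncurry_left) hh_nonneg hh_bdd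
end

section
/- Let E : [0,∞) → ℝ be nonnegative, differentiable and nonincreasing, let ξ : [0,∞) → ℝ be nonnegative, differentiable and nonincreasing, and let λ, γ > 0 be such that ξ(t) E′(t) ≤ −λ ξ(t) E(t) − γ E′(t) for all t ≥ 0. Then there exist constants λ₀, λ₁ > 0 such that E(t) ≤ λ₀ exp( −λ₁ ∫_0^t ξ(s) ds ) for all t ≥ 0. -/
open MeasureTheory Set

/-!
The differential inequality says `(ξ + γ) E' ≤ -λ ξ E`. Where `E > 0`, a bound `ξ ≤ M` turns this
into `(log E)' ≤ -(λ / (M + γ)) ξ`. If `E t > 0`, then `E > 0` on all of `[0, t]`, since a function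
whose derivative is nonpositive wherever it is positive cannot leave `(-∞, 0]`. It remains to
integrate the logarithmic derivative over `[0, t]`.
-/

section RightDerivative

variable {f f' : ℝ → ℝ} {a b : ℝ}

theorem nonpos_of_deriv_right_nonpos_of_pos (hf : ContinuousOn f (Icc a b))
    (hf' : ∀ x ∈ Ico a b, HasDerivWithinAt f (f' x) (Ici x) x)
    (hf'_nonpos : ∀ x ∈ Ico a b, 0 < f x → f' x ≤ 0) (ha : f a ≤ 0) {x : ℝ}
    (hx : x ∈ Icc a b) : f x ≤ 0 := by
  -- The comparison theorem wants a strict inequality of slopes, hence barriers of slope `ε > 0`.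
  have le_barrier : ∀ ε > 0, f x ≤ ε * (x - a + 1) := by
    intro ε hε
    have barrier_deriv (y : ℝ) : HasDerivAt (fun z => ε * (z - a + 1)) ε y := by
      simpa only [mul_one] using (((hasDerivAt_id' y).sub_const a).add_const 1).const_mul ε
    refine image_le_of_deriv_right_lt_deriv_boundary (B := fun z => ε * (z - a + 1)) hf hf'
      (by linarith) barrier_deriv (fun y hy hfy => ?_) hx
    have barrier_pos : 0 < ε * (y - a + 1) := mul_pos hε (by linarith [hy.1])
    exact (hf'_nonpos y hy (hfy ▸ barrier_pos)).trans_lt hε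
  have hpos : 0 < x - a + 1 := by linarith [hx.1]
  refine le_of_forall_pos_le_add fun δ hδ => ?_
  simpa only [div_mul_cancel₀ δ hpos.ne', zero_add] using le_barrier _ (div_pos hδ hpos)

theorem le_mul_exp_integral_of_deriv_right_le {k : ℝ → ℝ} (hab : a ≤ b)
    (hf : ContinuousOn f (Icc a b))
    (hf' : ∀ x ∈ Ioo a b, HasDerivWithinAt f (f' x) (Ici x) x)
    (hf_pos : ∀ x ∈ Icc a b, 0 < f x) (hk : IntervalIntegrable k volume a b)
    (hle : ∀ x ∈ Ioo a b, f' x ≤ k x * f x) :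
    f b ≤ f a * Real.exp (∫ x in a..b, k x) := by
  have ha : 0 < f a := hf_pos a (left_mem_Icc.2 hab)
  have hb : 0 < f b := hf_pos b (right_mem_Icc.2 hab)
  have log_sub_le : Real.log (f b) - Real.log (f a) ≤ ∫ x in a..b, k x := by
    refine intervalIntegral.sub_le_integral_of_hasDeriv_right_of_le hab
      (hf.log fun x hx => (hf_pos x hx).ne') (g' := fun x => f' x / f x) (fun x hx => ?_)
      ((intervalIntegrable_iff_integrableOn_Icc_of_le hab).1 hk) (fun x hx => ?_)
    · exact ((hf' x hx).log (hf_pos x (Ioo_subset_Icc_self hx)).ne').Ioi_of_Ici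
    · exact (div_le_iff₀ (hf_pos x (Ioo_subset_Icc_self hx))).2 (hle x hx)
  calc f b = Real.exp (Real.log (f b)) := (Real.exp_log hb).symm
    _ ≤ Real.exp (Real.log (f a) + ∫ x in a..b, k x) :=
      Real.exp_le_exp.2 (sub_le_iff_le_add'.1 log_sub_le)
    _ = f a * Real.exp (∫ x in a..b, k x) := by rw [Real.exp_add, Real.exp_log ha]

theorem le_max_mul_exp_integral_of_deriv_right_le {k : ℝ → ℝ} (hab : a ≤ b)
    (hf : ContinuousOn f (Icc a b))
    (hf' : ∀ x ∈ Ico a b, HasDerivWithinAt f (f' x) (Ici x) x)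
    (hk : IntervalIntegrable k volume a b) (hk_nonpos : ∀ x ∈ Ico a b, k x ≤ 0)
    (hle : ∀ x ∈ Ico a b, 0 < f x → f' x ≤ k x * f x) :
    f b ≤ max (f a) 0 * Real.exp (∫ x in a..b, k x) := by
  rcases le_or_gt (f b) 0 with hb | hb
  · exact hb.trans (by positivity)
  have f_pos : ∀ x ∈ Icc a b, 0 < f x := by
    intro x hx
    by_contra! hfx
    have hsub : Ico x b ⊆ Ico a b := Ico_subset_Ico_left hx.1
    refine hb.not_ge (nonpos_of_deriv_right_nonpos_of_pos (hf.mono (Icc_subset_Icc_left hx.1))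
      (fun y hy => hf' y (hsub hy)) (fun y hy hfy => ?_) hfx (right_mem_Icc.2 hx.2))
    exact (hle y (hsub hy) hfy).trans
      (mul_nonpos_of_nonpos_of_nonneg (hk_nonpos y (hsub hy)) hfy.le)
  calc f b ≤ f a * Real.exp (∫ x in a..b, k x) :=
      le_mul_exp_integral_of_deriv_right_le hab hf (fun x hx => hf' x (Ioo_subset_Ico_self hx))
        f_pos hk fun x hx => hle x (Ioo_subset_Ico_self hx) (f_pos x (Ioo_subset_Icc_self hx))
    _ ≤ max (f a) 0 * Real.exp (∫ x in a..b, k x) := by gcongr; exact le_max_left _ _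

end RightDerivative

theorem le_neg_div_mul_mul_of_mul_le_sub {K : Type*} [Field K] [LinearOrder K]
    [IsStrictOrderedRing K] {x M d e lam γ : K} (hlam : 0 ≤ lam) (hγ : 0 < γ) (hx : 0 ≤ x)
    (hxM : x ≤ M) (he : 0 ≤ e) (h : x * d ≤ -lam * x * e - γ * d) :
    d ≤ -(lam / (M + γ)) * x * e := by
  have hxγ : 0 < x + γ := by positivity
  have hd : d ≤ -(lam * x * e / (x + γ)) := by
    rw [← neg_div, le_div_iff₀ hxγ]
    linarith
  calc d ≤ -(lam * x * e / (x + γ)) := hd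
    _ ≤ -(lam * x * e / (M + γ)) := by gcongr
    _ = -(lam / (M + γ)) * x * e := by ring

theorem general_exponential_decay_general {E E' ξ : ℝ → ℝ} {lam γ M : ℝ} (hlam : 0 ≤ lam)
    (hγ : 0 < γ) (hE : ContinuousOn E (Ici 0))
    (hE_deriv : ∀ t, 0 ≤ t → HasDerivWithinAt E (E' t) (Ici t) t)
    (hξ_nonneg : ∀ t, 0 ≤ t → 0 ≤ ξ t) (hξ_le : ∀ t, 0 ≤ t → ξ t ≤ M)
    (hξ_int : ∀ t, 0 ≤ t → IntervalIntegrable ξ volume 0 t)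
    (hineq : ∀ t, 0 ≤ t → ξ t * E' t ≤ -lam * ξ t * E t - γ * E' t) {t : ℝ} (ht : 0 ≤ t) :
    E t ≤ max (E 0) 0 * Real.exp (-(lam / (M + γ)) * ∫ s in (0 : ℝ)..t, ξ s) := by
  have hM : 0 ≤ M := (hξ_nonneg 0 le_rfl).trans (hξ_le 0 le_rfl)
  have rate_nonneg : 0 ≤ lam / (M + γ) := by positivity
  rw [← intervalIntegral.integral_const_mul]
  exact le_max_mul_exp_integral_of_deriv_right_le ht (hE.mono Icc_subset_Ici_self)
    (fun s hs => hE_deriv s hs.1) ((hξ_int t ht).const_mul _)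
    (fun s hs => mul_nonpos_of_nonpos_of_nonneg (neg_nonpos.2 rate_nonneg) (hξ_nonneg s hs.1))
    fun s hs hEs => le_neg_div_mul_mul_of_mul_le_sub hlam hγ (hξ_nonneg s hs.1)
      (hξ_le s hs.1) hEs.le (hineq s hs.1)

/-- Analytic core of the case `p = 1` of Theorem 3.3 (decay estimate (3.9)). -/
theorem general_exponential_decay
    (E E' ξ ξ' : ℝ → ℝ) (lam γ : ℝ) (hlam : 0 < lam) (hγ : 0 < γ)
    (hE_nonneg : ∀ t, 0 ≤ t → 0 ≤ E t)
    (hE_deriv : ∀ t, 0 ≤ t → HasDerivAt E (E' t) t)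
    (hE_mono : AntitoneOn E (Ici 0))
    (hξ_nonneg : ∀ t, 0 ≤ t → 0 ≤ ξ t)
    (hξ_deriv : ∀ t, 0 ≤ t → HasDerivAt ξ (ξ' t) t)
    (hξ_mono : AntitoneOn ξ (Ici 0))
    (hineq : ∀ t, 0 ≤ t → ξ t * E' t ≤ -lam * ξ t * E t - γ * E' t) :
    ∃ lam₀ > 0, ∃ lam₁ > 0, ∀ t, 0 ≤ t →
      E t ≤ lam₀ * Real.exp (-lam₁ * ∫ s in (0 : ℝ)..t, ξ s) := by
  have hξ₀ : 0 ≤ ξ 0 := hξ_nonneg 0 le_rfl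
  have hE_cont : ContinuousOn E (Ici 0) :=
    fun t ht => (hE_deriv t ht).continuousAt.continuousWithinAt
  have hξ_int (t : ℝ) (ht : 0 ≤ t) : IntervalIntegrable ξ volume 0 t :=
    (hξ_mono.mono (uIcc_of_le ht ▸ Icc_subset_Ici_self)).intervalIntegrable
  refine ⟨max (E 0) 0 + 1, by positivity, lam / (ξ 0 + γ), by positivity, fun t ht => ?_⟩
  refine (general_exponential_decay_general hlam.le hγ hE_cont
    (fun s hs => (hE_deriv s hs).hasDerivWithinAt) hξ_nonneg
    (fun s hs => hξ_mono self_mem_Ici hs hs) hξ_int hineq ht).trans ?_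
  gcongr
  exact le_add_of_nonneg_right zero_le_one
end

section
/- Let p be a real number with 1 < p < 3/2, let E : [0,∞) → ℝ be nonnegative, differentiable and nonincreasing, let ξ : [0,∞) → ℝ be positive, differentiable and nonincreasing, and let λ, K > 0 be such that ξ(t) E′(t) ≤ −λ ξ(t) E(t) + K (−E′(t))^{1/(2p−1)} for all t ≥ 0. Then there exists λ₀ > 0 such that E(t) ≤ λ₀ ( 1 + ∫_0^t ξ(s)^{2p−1} ds )^{−1/(2p−2)} for all t ≥ 0. -/
open MeasureTheory Set

/-!
Write `q = 2p - 1 > 1` and `D = -E' ≥ 0`. The hypothesis reads `lam ξ E ≤ ξ D + K D ^ (1 / q)`, so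
one of the two terms on the right is at least half of the left-hand side. Either `lam E ≤ 2 D`, and
then `(ξ E) ^ q` is bounded by a multiple of `D` because `ξ` and `E` are bounded, or
`lam ξ E ≤ 2 K D ^ (1 / q)`, which says the same after taking `q`-th powers. In both cases
`c ξ ^ q E ^ q ≤ -E'` for some `c > 0`. This Bernoulli inequality bounds the derivative of
`E ^ (1 - q)` from below by `(q - 1) c ξ ^ q`, and integration gives the decay.
-/

lemma mul_rpow_le_rpow_mul_rpow_mul {q x N e M : ℝ} (hq : 1 ≤ q) (hx : x ∈ Icc 0 N)
    (he : e ∈ Icc 0 M) : (x * e) ^ q ≤ N ^ q * M ^ (q - 1) * e := by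
  obtain ⟨hx₀, hxN⟩ := hx
  obtain ⟨he₀, heM⟩ := he
  have hN : 0 ≤ N := hx₀.trans hxN
  calc (x * e) ^ q = x ^ q * (e ^ (q - 1) * e ^ (1 : ℝ)) := by
        rw [Real.mul_rpow hx₀ he₀, ← Real.rpow_add_of_nonneg he₀ (by linarith) zero_le_one,
          sub_add_cancel]
    _ = x ^ q * e ^ (q - 1) * e := by rw [Real.rpow_one, mul_assoc]
    _ ≤ N ^ q * M ^ (q - 1) * e := by gcongr

lemma mul_rpow_le_of_mul_le_add_rpow {q lam K x N e M D : ℝ} (hq : 1 ≤ q) (hlam : 0 < lam)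
    (hK : 0 ≤ K) (hx : x ∈ Icc 0 N) (he : e ∈ Icc 0 M) (hD : 0 ≤ D)
    (h : lam * (x * e) ≤ x * D + K * D ^ (1 / q)) :
    (x * e) ^ q ≤ (2 * (N ^ q * M ^ (q - 1)) / lam + (2 * K / lam) ^ q) * D := by
  have hN : 0 ≤ N := hx.1.trans hx.2
  have hM : 0 ≤ M := he.1.trans he.2
  rcases le_total (lam * e) (2 * D) with hlarge | hsmall
  · have he_le : e ≤ 2 * D / lam := by rwa [le_div_iff₀' hlam]
    calc (x * e) ^ q ≤ N ^ q * M ^ (q - 1) * e := mul_rpow_le_rpow_mul_rpow_mul hq hx he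
      _ ≤ N ^ q * M ^ (q - 1) * (2 * D / lam) := by gcongr
      _ = 2 * (N ^ q * M ^ (q - 1)) / lam * D := by ring
      _ ≤ _ := by gcongr; exact le_add_of_nonneg_right (by positivity)
  · have hxe_le : x * e ≤ 2 * K / lam * D ^ (1 / q) := by
      rw [div_mul_eq_mul_div, le_div_iff₀' hlam]
      linarith [mul_le_mul_of_nonneg_left hsmall hx.1]
    calc (x * e) ^ q ≤ (2 * K / lam * D ^ (1 / q)) ^ q :=
          Real.rpow_le_rpow (mul_nonneg hx.1 he.1) hxe_le (by linarith)
      _ = (2 * K / lam) ^ q * D := by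
          rw [Real.mul_rpow (by positivity) (by positivity), one_div,
            Real.rpow_inv_rpow hD (by linarith)]
      _ ≤ _ := by gcongr; exact le_add_of_nonneg_left (by positivity)

lemma rpow_one_sub_add_integral_le_of_mul_rpow_le_neg_deriv {q a b : ℝ} {E E' φ : ℝ → ℝ}
    (hq : 1 ≤ q) (hab : a ≤ b) (hE_cont : ContinuousOn E (Icc a b))
    (hE_pos : ∀ s ∈ Icc a b, 0 < E s)
    (hE_deriv : ∀ s ∈ Ioo a b, HasDerivWithinAt E (E' s) (Ioi s) s)
    (hφ : IntegrableOn φ (Icc a b)) (hφE : ∀ s ∈ Ioo a b, φ s * E s ^ q ≤ -E' s) :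
    E a ^ (1 - q) + (q - 1) * ∫ s in a..b, φ s ≤ E b ^ (1 - q) := by
  have hderiv : ∀ s ∈ Ioo a b,
      HasDerivWithinAt (fun s => E s ^ (1 - q)) (E' s * (1 - q) * E s ^ (1 - q - 1)) (Ioi s) s :=
    fun s hs => (hE_deriv s hs).rpow_const (.inl (hE_pos s (Ioo_subset_Icc_self hs)).ne')
  have hφ_le : ∀ s ∈ Ioo a b, (q - 1) * φ s ≤ E' s * (1 - q) * E s ^ (1 - q - 1) := by
    intro s hs
    have hEs : 0 < E s := hE_pos s (Ioo_subset_Icc_self hs)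
    have hφ_le_div : φ s ≤ -E' s / E s ^ q := (le_div_iff₀ (by positivity)).2 (hφE s hs)
    calc (q - 1) * φ s ≤ (q - 1) * (-E' s / E s ^ q) :=
          mul_le_mul_of_nonneg_left hφ_le_div (by linarith)
      _ = E' s * (1 - q) * E s ^ (1 - q - 1) := by
          rw [show 1 - q - 1 = -q by ring, Real.rpow_neg hEs.le]
          ring
  have hint := intervalIntegral.integral_le_sub_of_hasDeriv_right_of_le hab
    (hE_cont.rpow_const fun s hs => .inl (hE_pos s hs).ne') hderiv (hφ.const_mul (q - 1)) hφ_le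
  rw [intervalIntegral.integral_const_mul] at hint
  linarith

lemma exists_forall_le_mul_one_add_rpow {r a b : ℝ} (hr : 0 < r) (ha : 0 < a) (hb : 0 < b) :
    ∃ C > 0, ∀ y I : ℝ, 0 < y → 0 ≤ I → a + b * I ≤ y ^ (-r) →
      y ≤ C * (1 + I) ^ (-(1 / r)) := by
  have hm : 0 < min a b := lt_min ha hb
  refine ⟨min a b ^ (-(1 / r)), by positivity, fun y I hy hI h => ?_⟩
  have hm_le : min a b * (1 + I) ≤ y ^ (-r) :=
    calc min a b * (1 + I) = min a b + min a b * I := by ring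
      _ ≤ a + b * I := by gcongr; exacts [min_le_left a b, min_le_right a b]
      _ ≤ y ^ (-r) := h
  rw [← Real.mul_rpow hm.le (by linarith), one_div, ← inv_neg]
  exact (Real.le_rpow_inv_iff_of_neg hy (by positivity) (neg_lt_zero.2 hr)).2 hm_le

lemma exists_forall_le_mul_one_add_integral_rpow {q c : ℝ} {E E' φ : ℝ → ℝ} (hq : 1 < q)
    (hc : 0 < c) (hE_deriv : ∀ t, 0 ≤ t → HasDerivWithinAt E (E' t) (Ici 0) t)
    (hE_mono : AntitoneOn E (Ici 0)) (hφ_nonneg : ∀ t, 0 ≤ t → 0 ≤ φ t)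
    (hφ_int : ∀ t, 0 ≤ t → IntegrableOn φ (Icc 0 t))
    (hφE : ∀ t, 0 ≤ t → 0 < E t → c * φ t * E t ^ q ≤ -E' t) :
    ∃ C > 0, ∀ t, 0 ≤ t → E t ≤ C * (1 + ∫ s in (0 : ℝ)..t, φ s) ^ (-(1 / (q - 1))) := by
  have hI : ∀ t, 0 ≤ t → 0 ≤ ∫ s in (0 : ℝ)..t, φ s := fun t ht =>
    intervalIntegral.integral_nonneg ht fun s hs => hφ_nonneg s hs.1
  rcases le_or_gt (E 0) 0 with hE₀ | hE₀
  · refine ⟨1, one_pos, fun t ht => ((hE_mono self_mem_Ici ht ht).trans hE₀).trans ?_⟩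
    have := hI t ht
    positivity
  have hr : 0 < q - 1 := sub_pos.2 hq
  obtain ⟨C, hC, hC_le⟩ :=
    exists_forall_le_mul_one_add_rpow hr (Real.rpow_pos_of_pos hE₀ (1 - q)) (mul_pos hr hc)
  refine ⟨C, hC, fun t ht => ?_⟩
  have hIt := hI t ht
  rcases le_or_gt (E t) 0 with hEt | hEt
  · exact hEt.trans (by positivity)
  have hE_pos : ∀ s ∈ Icc 0 t, 0 < E s := fun s hs => hEt.trans_le (hE_mono hs.1 ht hs.2)
  have hbernoulli := rpow_one_sub_add_integral_le_of_mul_rpow_le_neg_deriv hq.le ht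
    (fun s hs => (hE_deriv s hs.1).continuousWithinAt.mono Icc_subset_Ici_self) hE_pos
    (fun s hs => (hE_deriv s hs.1.le).mono (Ioi_subset_Ici hs.1.le))
    ((hφ_int t ht).const_mul c)
    (fun s hs => hφE s hs.1.le (hE_pos s (Ioo_subset_Icc_self hs)))
  rw [intervalIntegral.integral_const_mul, ← mul_assoc, ← neg_sub q 1] at hbernoulli
  rw [← neg_sub q 1] at hC_le
  exact hC_le _ _ hEt hIt hbernoulli

lemma integrableOn_Icc_rpow_of_mem_Icc {q N a : ℝ} {ξ : ℝ → ℝ} (hq : 0 ≤ q)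
    (hξ_meas : AEMeasurable ξ (volume.restrict (Ici a))) (hξ : ∀ t, a ≤ t → ξ t ∈ Icc 0 N)
    (b : ℝ) : IntegrableOn (fun s => ξ s ^ q) (Icc a b) := by
  refine IntegrableOn.of_bound measure_Icc_lt_top
    ((hξ_meas.mono_set Icc_subset_Ici_self).pow_const q).aestronglyMeasurable (N ^ q) ?_
  filter_upwards [ae_restrict_mem measurableSet_Icc] with s hs
  obtain ⟨hξ_nonneg, hξ_le⟩ := hξ s hs.1
  rw [Real.norm_of_nonneg (by positivity)]
  gcongr

theorem general_polynomial_decay_general {p : ℝ} (hp : 1 < p) {E E' ξ : ℝ → ℝ} {lam K N : ℝ}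
    (hlam : 0 < lam) (hK : 0 < K)
    (hE_deriv : ∀ t, 0 ≤ t → HasDerivWithinAt E (E' t) (Ici 0) t)
    (hE_mono : AntitoneOn E (Ici 0))
    (hξ_meas : AEMeasurable ξ (volume.restrict (Ici 0)))
    (hξ : ∀ t, 0 ≤ t → ξ t ∈ Icc 0 N)
    (hineq : ∀ t, 0 ≤ t →
      ξ t * E' t ≤ -lam * ξ t * E t + K * (-E' t) ^ (1 / (2 * p - 1))) :
    ∃ lam₀ > 0, ∀ t, 0 ≤ t →
      E t ≤ lam₀ * (1 + ∫ s in (0 : ℝ)..t, ξ s ^ (2 * p - 1)) ^ (-(1 / (2 * p - 2))) := by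
  rw [show 2 * p - 2 = 2 * p - 1 - 1 by ring]
  set q := 2 * p - 1
  have hq : 1 < q := by linarith
  have hE'_nonpos : ∀ t, 0 ≤ t → E' t ≤ 0 := fun t ht =>
    (hE_deriv t ht).derivWithin (uniqueDiffOn_Ici 0 t ht) ▸ hE_mono.derivWithin_nonpos
  have hN : 0 ≤ N := (hξ 0 le_rfl).1.trans (hξ 0 le_rfl).2
  set A := 2 * (N ^ q * max (E 0) 0 ^ (q - 1)) / lam + (2 * K / lam) ^ q
  have hA : 0 < A := by positivity
  refine exists_forall_le_mul_one_add_integral_rpow hq (inv_pos.2 hA) hE_deriv hE_mono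
    (fun t ht => Real.rpow_nonneg (hξ t ht).1 q)
    (fun t _ => integrableOn_Icc_rpow_of_mem_Icc (by linarith) hξ_meas hξ t) fun t ht hEt => ?_
  have hEt_mem : E t ∈ Icc 0 (max (E 0) 0) :=
    ⟨hEt.le, (hE_mono self_mem_Ici ht ht).trans (le_max_left _ _)⟩
  rw [mul_assoc, inv_mul_le_iff₀ hA, ← Real.mul_rpow (hξ t ht).1 hEt.le]
  exact mul_rpow_le_of_mul_le_add_rpow hq.le hlam hK.le (hξ t ht) hEt_mem
    (neg_nonneg.2 (hE'_nonpos t ht)) (by linarith [hineq t ht])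

/-- Analytic core of the case `p > 1` of Theorem 3.3 (decay estimate (3.10)). -/
theorem general_polynomial_decay
    (p : ℝ) (hp₁ : 1 < p) (hp₂ : p < 3 / 2)
    (E E' ξ ξ' : ℝ → ℝ) (lam K : ℝ) (hlam : 0 < lam) (hK : 0 < K)
    (hE_nonneg : ∀ t, 0 ≤ t → 0 ≤ E t)
    (hE_deriv : ∀ t, 0 ≤ t → HasDerivAt E (E' t) t)
    (hE_mono : AntitoneOn E (Ici 0))
    (hξ_pos : ∀ t, 0 ≤ t → 0 < ξ t)
    (hξ_deriv : ∀ t, 0 ≤ t → HasDerivAt ξ (ξ' t) t)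
    (hξ_mono : AntitoneOn ξ (Ici 0))
    (hineq : ∀ t, 0 ≤ t →
      ξ t * E' t ≤ -lam * ξ t * E t + K * (-E' t) ^ (1 / (2 * p - 1))) :
    ∃ lam₀ > 0, ∀ t, 0 ≤ t →
      E t ≤ lam₀ * (1 + ∫ s in (0 : ℝ)..t, ξ s ^ (2 * p - 1))
              ^ (-(1 / (2 * p - 2))) :=
  general_polynomial_decay_general hp₁ hlam hK (fun t ht => (hE_deriv t ht).hasDerivWithinAt)
    hE_mono (aemeasurable_restrict_of_antitoneOn measurableSet_Ici hξ_mono)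
    (fun t ht => ⟨(hξ_pos t ht).le, hξ_mono self_mem_Ici ht ht⟩) hineq
end

section
/- Let α > 0, let E : [0,∞) → ℝ be nonnegative, differentiable and nonincreasing, let ξ : [0,∞) → ℝ be positive, differentiable and nonincreasing, and let λ, K > 0 be such that ξ(t) E′(t) ≤ −λ ξ(t) E(t) + K (−E′(t))^{1/(α+1)} for all t ≥ 0. Then there exist constants c₆ > 0 and C > 0 such that the function t ↦ ξ(t)^{α+1} E(t)^{α+1} + C E(t) is differentiable and its derivative satisfies (ξ^{α+1} E^{α+1} + C E)′(t) ≤ −c₆ ξ(t)^{α+1} E(t)^{α+1} for all t ≥ 0. -/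
open MeasureTheory Set

/-!
Let `x = ξ E`. Since `ξ' E ≤ 0`, the hypothesis also bounds `x' = ξ' E + ξ E'`, hence, after
multiplication by `x ^ α`, the derivative of `x ^ (α + 1) / (α + 1)`. Young's inequality bounds
`K x ^ α (-E') ^ (1 / (α + 1))` by half of `lam x ^ (α + 1)` plus a multiple of `-E'`, and the
latter is cancelled by the derivative of `C E`.
-/

lemma hasDerivAt_rpow_mul_rpow {f g : ℝ → ℝ} {f' g' t α : ℝ} (hα : 0 ≤ α)
    (hf : HasDerivAt f f' t) (hg : HasDerivAt g g' t) (hft : 0 ≤ f t) (hgt : 0 ≤ g t) :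
    HasDerivAt (fun τ => f τ ^ (α + 1) * g τ ^ (α + 1))
      ((α + 1) * ((f t * g t) ^ α * (f' * g t + f t * g'))) t := by
  have hα₁ : 1 ≤ α + 1 := by linarith
  refine ((hf.rpow_const (Or.inr hα₁)).mul (hg.rpow_const (Or.inr hα₁))).congr_deriv ?_
  simp only [add_sub_cancel_right]
  rw [Real.mul_rpow hft hgt, Real.rpow_add_one' hft (by linarith),
    Real.rpow_add_one' hgt (by linarith)]
  ring

lemma rpow_mul_le_rpow_add_one_add_rpow_add_one {x y α : ℝ} (hα : 0 ≤ α) (hx : 0 ≤ x)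
    (hy : 0 ≤ y) : x ^ α * y ≤ x ^ (α + 1) + y ^ (α + 1) := by
  have hα₁ : α + 1 ≠ 0 := by linarith
  rcases le_total y x with hyx | hxy
  · calc x ^ α * y ≤ x ^ α * x := by gcongr
      _ = x ^ (α + 1) := (Real.rpow_add_one' hx hα₁).symm
      _ ≤ x ^ (α + 1) + y ^ (α + 1) := le_add_of_nonneg_right (by positivity)
  · calc x ^ α * y ≤ y ^ α * y := by gcongr
      _ = y ^ (α + 1) := (Real.rpow_add_one' hy hα₁).symm
      _ ≤ x ^ (α + 1) + y ^ (α + 1) := le_add_of_nonneg_left (by positivity)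

lemma rpow_mul_le_mul_rpow_add_one_add_mul_div_rpow {x y ε α : ℝ} (hα : 0 ≤ α) (hε : 0 < ε)
    (hx : 0 ≤ x) (hy : 0 ≤ y) :
    x ^ α * y ≤ ε * x ^ (α + 1) + ε * (y / ε) ^ (α + 1) :=
  calc x ^ α * y = ε * (x ^ α * (y / ε)) := by field_simp
    _ ≤ ε * (x ^ (α + 1) + (y / ε) ^ (α + 1)) := by
      gcongr
      exact rpow_mul_le_rpow_add_one_add_rpow_add_one hα hx (by positivity)
    _ = ε * x ^ (α + 1) + ε * (y / ε) ^ (α + 1) := mul_add _ _ _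

lemma rpow_mul_le_of_le_neg_mul_add_rpow {x v D lam K α : ℝ} (hα : 0 ≤ α) (hlam : 0 < lam)
    (hK : 0 ≤ K) (hx : 0 ≤ x) (hD : 0 ≤ D) (hv : v ≤ -lam * x + K * D ^ (1 / (α + 1))) :
    x ^ α * v ≤ -(lam / 2) * x ^ (α + 1) + lam / 2 * (K / (lam / 2)) ^ (α + 1) * D := by
  have hα₁ : α + 1 ≠ 0 := by linarith
  have hroot : (K * D ^ (1 / (α + 1)) / (lam / 2)) ^ (α + 1)
      = (K / (lam / 2)) ^ (α + 1) * D := by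
    rw [mul_div_right_comm, Real.mul_rpow (by positivity) (by positivity), one_div,
      Real.rpow_inv_rpow hD hα₁]
  have hyoung : x ^ α * (K * D ^ (1 / (α + 1)))
      ≤ lam / 2 * x ^ (α + 1) + lam / 2 * ((K / (lam / 2)) ^ (α + 1) * D) :=
    hroot ▸ rpow_mul_le_mul_rpow_add_one_add_mul_div_rpow hα (half_pos hlam) hx (by positivity)
  calc x ^ α * v ≤ x ^ α * (-lam * x + K * D ^ (1 / (α + 1))) := by gcongr
    _ = -lam * x ^ (α + 1) + x ^ α * (K * D ^ (1 / (α + 1))) := by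
      rw [Real.rpow_add_one' hx hα₁]
      ring
    _ ≤ -(lam / 2) * x ^ (α + 1) + lam / 2 * (K / (lam / 2)) ^ (α + 1) * D := by linarith

/-- Intermediate differential inequality in the proof of Theorem 3.3 for `p > 1`. -/
theorem auxiliary_differential_inequality
    (α : ℝ) (hα : 0 < α)
    (E E' ξ ξ' : ℝ → ℝ) (lam K : ℝ) (hlam : 0 < lam) (hK : 0 < K)
    (hE_nonneg : ∀ t, 0 ≤ t → 0 ≤ E t)
    (hE_deriv : ∀ t, 0 ≤ t → HasDerivAt E (E' t) t)
    (hE_mono : AntitoneOn E (Ici 0))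
    (hξ_pos : ∀ t, 0 ≤ t → 0 < ξ t)
    (hξ_deriv : ∀ t, 0 ≤ t → HasDerivAt ξ (ξ' t) t)
    (hξ_mono : AntitoneOn ξ (Ici 0))
    (hineq : ∀ t, 0 ≤ t →
      ξ t * E' t ≤ -lam * ξ t * E t + K * (-E' t) ^ (1 / (α + 1))) :
    ∃ c₆ > 0, ∃ C > 0, ∀ t, 0 ≤ t → ∃ d : ℝ,
      HasDerivAt (fun τ => ξ τ ^ (α + 1) * E τ ^ (α + 1) + C * E τ) d t ∧
        d ≤ -c₆ * ξ t ^ (α + 1) * E t ^ (α + 1) := by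
  let B := lam / 2 * (K / (lam / 2)) ^ (α + 1)
  refine ⟨(α + 1) * (lam / 2), by positivity, (α + 1) * B, by positivity, fun t ht => ?_⟩
  have hE := hE_nonneg t ht
  have hξ := (hξ_pos t ht).le
  have hacc := (uniqueDiffOn_Ici (0 : ℝ) t ht).accPt
  have hE' : E' t ≤ 0 := (hE_deriv t ht).hasDerivWithinAt.nonpos_of_antitoneOn hacc hE_mono
  have hξ' : ξ' t ≤ 0 := (hξ_deriv t ht).hasDerivWithinAt.nonpos_of_antitoneOn hacc hξ_mono
  have hprod : ξ' t * E t + ξ t * E' t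
      ≤ -lam * (ξ t * E t) + K * (-E' t) ^ (1 / (α + 1)) := by
    linarith [hineq t ht, mul_nonpos_of_nonpos_of_nonneg hξ' hE]
  have hdecay : (ξ t * E t) ^ α * (ξ' t * E t + ξ t * E' t)
      ≤ -(lam / 2) * (ξ t * E t) ^ (α + 1) + B * -E' t :=
    rpow_mul_le_of_le_neg_mul_add_rpow hα.le hlam hK.le (mul_nonneg hξ hE)
      (neg_nonneg.mpr hE') hprod
  refine ⟨_, (hasDerivAt_rpow_mul_rpow hα.le (hξ_deriv t ht) (hE_deriv t ht) hξ hE).add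
    ((hE_deriv t ht).const_mul _), ?_⟩
  rw [Real.mul_rpow (z := α + 1) hξ hE] at hdecay
  linarith [mul_le_mul_of_nonneg_left hdecay (by linarith : 0 ≤ α + 1)]
end

section
/- Let p > 1, let E : [0,∞) → ℝ be nonnegative, differentiable and nonincreasing, let ξ : [0,∞) → ℝ be positive, differentiable and nonincreasing, and let λ, K > 0 be such that ξ(t) E′(t) ≤ −λ ξ(t) E(t) + K (−E′(t))^{1/p} for all t ≥ 0. Then there exists λ₀ > 0 such that E(t) ≤ λ₀ ( 1 + ∫_0^t ξ(s)^p ds )^{−1/(p−1)} for all t ≥ 0. -/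
open MeasureTheory Set

/-!
Multiplying the differential inequality by `(ξ E) ^ (p - 1)` and absorbing the term
`K (-E') ^ (1 / p) (ξ E) ^ (p - 1)` by Young's inequality leaves `c ξ ^ p E ^ p ≤ -E'`, because `ξ`
and `E` are bounded. Equivalently, the derivative of `E ^ (1 - p)` is at least `(p - 1) c ξ ^ p`;
integrating and taking the power `1 / (1 - p)`, which reverses inequalities, gives the decay.
-/

section Young

variable {p x y : ℝ}

lemma mul_rpow_sub_one (hp : p ≠ 0) (hx : 0 ≤ x) : x * x ^ (p - 1) = x ^ p := by
  rw [← Real.rpow_one_add' hx (by simpa using hp), add_sub_cancel]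

lemma mul_rpow_sub_one_le_rpow_add_rpow (hp : 1 ≤ p) (hx : 0 ≤ x) (hy : 0 ≤ y) :
    x * y ^ (p - 1) ≤ x ^ p + y ^ p := by
  have hp₀ : p ≠ 0 := by positivity
  have : 0 ≤ p - 1 := sub_nonneg.2 hp
  have hxp : 0 ≤ x ^ p := by positivity
  have hyp : 0 ≤ y ^ p := by positivity
  rcases le_total x y with hxy | hyx
  · calc x * y ^ (p - 1) ≤ y * y ^ (p - 1) := by gcongr
      _ = y ^ p := mul_rpow_sub_one hp₀ hy
      _ ≤ x ^ p + y ^ p := le_add_of_nonneg_left hxp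
  · calc x * y ^ (p - 1) ≤ x * x ^ (p - 1) := by gcongr
      _ = x ^ p := mul_rpow_sub_one hp₀ hx
      _ ≤ x ^ p + y ^ p := le_add_of_nonneg_right hyp

lemma mul_rpow_one_div_mul_rpow_sub_one_le {ε K d : ℝ} (hp : 1 ≤ p) (hε : 0 < ε) (hK : 0 ≤ K)
    (hd : 0 ≤ d) (hy : 0 ≤ y) :
    K * d ^ (1 / p) * y ^ (p - 1) ≤ ε * (K / ε) ^ p * d + ε * y ^ p := by
  have hd_pow : (d ^ (1 / p)) ^ p = d := by
    rw [one_div, Real.rpow_inv_rpow hd (by positivity)]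
  calc K * d ^ (1 / p) * y ^ (p - 1)
      = ε * (K / ε * d ^ (1 / p) * y ^ (p - 1)) := by field_simp
    _ ≤ ε * ((K / ε * d ^ (1 / p)) ^ p + y ^ p) := by
        gcongr
        exact mul_rpow_sub_one_le_rpow_add_rpow hp (by positivity) hy
    _ = ε * (K / ε) ^ p * d + ε * y ^ p := by
        rw [Real.mul_rpow (by positivity) (by positivity), hd_pow]
        ring

end Young

section Absorption

variable {p lam K : ℝ}

lemma mul_rpow_le_mul_of_mul_le_add_rpow {x e d : ℝ} (hp : 1 ≤ p) (hlam : 0 < lam) (hK : 0 ≤ K)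
    (hx : 0 ≤ x) (he : 0 ≤ e) (hd : 0 ≤ d) (h : lam * (x * e) ≤ x * d + K * d ^ (1 / p)) :
    lam / 2 * (x * e) ^ p ≤
      (x ^ p * e ^ (p - 1) + lam / 2 * (K / (lam / 2)) ^ p) * d := by
  have hp₀ : p ≠ 0 := by positivity
  have hxe : 0 ≤ x * e := mul_nonneg hx he
  have young := mul_rpow_one_div_mul_rpow_sub_one_le hp (half_pos hlam) hK hd hxe
  have main : lam * (x * e) ^ p ≤
      x ^ p * e ^ (p - 1) * d + K * d ^ (1 / p) * (x * e) ^ (p - 1) :=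
    calc lam * (x * e) ^ p = lam * (x * e) * (x * e) ^ (p - 1) := by
          rw [mul_assoc, mul_rpow_sub_one hp₀ hxe]
      _ ≤ (x * d + K * d ^ (1 / p)) * (x * e) ^ (p - 1) := by gcongr
      _ = x ^ p * e ^ (p - 1) * d + K * d ^ (1 / p) * (x * e) ^ (p - 1) := by
          rw [← mul_rpow_sub_one hp₀ hx, Real.mul_rpow hx he]
          ring
  linarith

lemma exists_mul_rpow_le_of_mul_le_add_rpow (hp : 1 ≤ p) (hlam : 0 < lam) (B M : ℝ) :
    ∃ c > 0, ∀ x e d : ℝ, 0 ≤ x → x ≤ B → 0 ≤ e → e ≤ M → 0 ≤ d →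
      lam * (x * e) ≤ x * d + K * d ^ (1 / p) → c * (x * e) ^ p ≤ d := by
  have : 0 ≤ p - 1 := sub_nonneg.2 hp
  set A := |B| ^ p * |M| ^ (p - 1) + lam / 2 * (|K| / (lam / 2)) ^ p + 1
  have hA : 0 < A := by positivity
  refine ⟨lam / 2 / A, by positivity, fun x e d hx hxB he heM hd h => ?_⟩
  have h_abs : lam * (x * e) ≤ x * d + |K| * d ^ (1 / p) := h.trans (by gcongr; exact le_abs_self K)
  have hcoeff : x ^ p * e ^ (p - 1) + lam / 2 * (|K| / (lam / 2)) ^ p ≤ A := by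
    refine le_add_of_le_of_nonneg ?_ zero_le_one
    gcongr
    exacts [hxB.trans (le_abs_self B), heM.trans (le_abs_self M)]
  rw [div_mul_eq_mul_div, div_le_iff₀' hA]
  calc lam / 2 * (x * e) ^ p
      ≤ (x ^ p * e ^ (p - 1) + lam / 2 * (|K| / (lam / 2)) ^ p) * d :=
        mul_rpow_le_mul_of_mul_le_add_rpow hp hlam (abs_nonneg K) hx he hd h_abs
    _ ≤ A * d := by gcongr

end Absorption

section Comparison

variable {p : ℝ} {f f' g : ℝ → ℝ}

lemma integral_le_rpow_one_sub_sub_rpow_one_sub {a b : ℝ} (hp : 1 ≤ p) (hab : a ≤ b)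
    (hf : ContinuousOn f (Icc a b)) (hf_pos : ∀ t ∈ Icc a b, 0 < f t)
    (hf' : ∀ t ∈ Ioo a b, HasDerivWithinAt f (f' t) (Ioi t) t)
    (hg : IntegrableOn g (Icc a b)) (h : ∀ t ∈ Ioo a b, g t * f t ^ p ≤ -f' t) :
    (p - 1) * ∫ t in a..b, g t ≤ f b ^ (1 - p) - f a ^ (1 - p) := by
  rw [← intervalIntegral.integral_const_mul]
  refine intervalIntegral.integral_le_sub_of_hasDeriv_right_of_le hab
    (hf.rpow_const fun t ht => .inl (hf_pos t ht).ne')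
    (fun t ht => (hf' t ht).rpow_const (.inl (hf_pos t (Ioo_subset_Icc_self ht)).ne'))
    (hg.const_mul (p - 1)) fun t ht => ?_
  have hft : 0 < f t := hf_pos t (Ioo_subset_Icc_self ht)
  have hgt : g t ≤ -f' t * f t ^ (-p) := by
    rw [Real.rpow_neg hft.le, ← div_eq_mul_inv, le_div_iff₀ (by positivity)]
    exact h t ht
  calc (p - 1) * g t ≤ (p - 1) * (-f' t * f t ^ (-p)) :=
        mul_le_mul_of_nonneg_left hgt (sub_nonneg.2 hp)
    _ = f' t * (1 - p) * f t ^ (1 - p - 1) := by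
        rw [sub_sub_cancel_left]
        ring

lemma antitoneOn_Ici_of_mul_rpow_le_neg_deriv {a : ℝ} (hf : ContinuousOn f (Ici a))
    (hf_nonneg : ∀ t, a < t → 0 ≤ f t) (hf' : ∀ t, a < t → HasDerivAt f (f' t) t)
    (hg_nonneg : ∀ t, a < t → 0 ≤ g t) (h : ∀ t, a < t → g t * f t ^ p ≤ -f' t) :
    AntitoneOn f (Ici a) := by
  refine antitoneOn_of_hasDerivWithinAt_nonpos (f' := f') (convex_Ici a) hf ?_ ?_ <;>
    rw [interior_Ici]
  · exact fun t ht => (hf' t ht).hasDerivWithinAt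
  · exact fun t ht => neg_nonneg.1 <|
      (mul_nonneg (hg_nonneg t ht) (Real.rpow_nonneg (hf_nonneg t ht) p)).trans (h t ht)

lemma exists_le_mul_one_add_integral_rpow {c : ℝ} (hp : 1 < p) (hc : 0 < c)
    (hf : ContinuousOn f (Ici 0)) (hf_nonneg : ∀ t, 0 ≤ t → 0 ≤ f t)
    (hf' : ∀ t, 0 < t → HasDerivAt f (f' t) t)
    (hg : LocallyIntegrableOn g (Ici 0)) (hg_nonneg : ∀ t, 0 ≤ t → 0 ≤ g t)
    (h : ∀ t, 0 < t → c * g t * f t ^ p ≤ -f' t) :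
    ∃ C > 0, ∀ t, 0 ≤ t → f t ≤ C * (1 + ∫ s in (0 : ℝ)..t, g s) ^ (-(1 / (p - 1))) := by
  have : 0 < p - 1 := sub_pos.2 hp
  have hf_anti : AntitoneOn f (Ici 0) := antitoneOn_Ici_of_mul_rpow_le_neg_deriv hf
    (fun t ht => hf_nonneg t ht.le) hf'
    (fun t ht => mul_nonneg hc.le (hg_nonneg t ht.le)) h
  have hf₀ : 0 ≤ f 0 := hf_nonneg 0 le_rfl
  -- `f 0 + 1` rather than `f 0`, since `0 ^ (1 - p) = 0`.
  set m := min ((f 0 + 1) ^ (1 - p)) ((p - 1) * c)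
  have hm : 0 < m := lt_min (by positivity) (by positivity)
  refine ⟨m ^ (-(1 / (p - 1))), by positivity, fun t ht => ?_⟩
  set I := ∫ s in (0 : ℝ)..t, g s
  have hI : 0 ≤ I := intervalIntegral.integral_nonneg ht fun s hs => hg_nonneg s hs.1
  rcases (hf_nonneg t ht).eq_or_lt with hft | hft
  · rw [← hft]
    positivity
  have hf_pos : ∀ s ∈ Icc 0 t, 0 < f s := fun s hs => hft.trans_le (hf_anti hs.1 ht hs.2)
  have growth : (p - 1) * (c * I) ≤ f t ^ (1 - p) - f 0 ^ (1 - p) := by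
    rw [← intervalIntegral.integral_const_mul]
    exact integral_le_rpow_one_sub_sub_rpow_one_sub hp.le ht (hf.mono Icc_subset_Ici_self) hf_pos
      (fun s hs => (hf' s hs.1).hasDerivWithinAt)
      ((hg.integrableOn_compact_subset Icc_subset_Ici_self isCompact_Icc).const_mul c)
      fun s hs => h s hs.1
  have initial : m ≤ f 0 ^ (1 - p) := (min_le_left _ _).trans <|
    Real.rpow_le_rpow_of_nonpos (hf_pos 0 ⟨le_rfl, ht⟩) (by linarith) (by linarith)
  have rate : m * I ≤ (p - 1) * c * I := by gcongr; exact min_le_right _ _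
  have hexp : -(1 / (p - 1)) = (1 - p)⁻¹ := by rw [one_div, ← inv_neg, neg_sub]
  rw [← Real.mul_rpow hm.le (by positivity), hexp,
    Real.le_rpow_inv_iff_of_neg hft (by positivity) (by linarith)]
  linarith

end Comparison

theorem optimal_polynomial_decay_general {p lam K B : ℝ} {E E' ξ : ℝ → ℝ}
    (hp : 1 < p) (hlam : 0 < lam)
    (hE_nonneg : ∀ t, 0 ≤ t → 0 ≤ E t)
    (hE_cont : ContinuousOn E (Ici 0))
    (hE_deriv : ∀ t, 0 < t → HasDerivAt E (E' t) t)
    (hE_anti : AntitoneOn E (Ici 0))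
    (hξ_nonneg : ∀ t, 0 ≤ t → 0 ≤ ξ t)
    (hξ_le : ∀ t, 0 < t → ξ t ≤ B)
    (hξ_int : LocallyIntegrableOn (fun t => ξ t ^ p) (Ici 0))
    (hineq : ∀ t, 0 < t → ξ t * E' t ≤ -lam * ξ t * E t + K * (-E' t) ^ (1 / p)) :
    ∃ lam₀ > 0, ∀ t, 0 ≤ t →
      E t ≤ lam₀ * (1 + ∫ s in (0 : ℝ)..t, ξ s ^ p) ^ (-(1 / (p - 1))) := by
  obtain ⟨c, hc, absorb⟩ := exists_mul_rpow_le_of_mul_le_add_rpow (K := K) hp.le hlam B (E 0)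
  refine exists_le_mul_one_add_integral_rpow hp hc hE_cont hE_nonneg hE_deriv hξ_int
    (fun t ht => Real.rpow_nonneg (hξ_nonneg t ht) p) fun t ht => ?_
  have hξt : 0 ≤ ξ t := hξ_nonneg t ht.le
  have hEt : 0 ≤ E t := hE_nonneg t ht.le
  have hE't : E' t ≤ 0 := (hE_deriv t ht).hasDerivWithinAt.nonpos_of_antitoneOn
    (uniqueDiffOn_Ici 0 t ht.le).accPt hE_anti
  rw [mul_assoc, ← Real.mul_rpow hξt hEt]
  exact absorb (ξ t) (E t) (-E' t) hξt (hξ_le t ht) hEt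
    (hE_anti self_mem_Ici ht.le ht.le) (neg_nonneg.2 hE't) (by linarith [hineq t ht])

/-- Analytic core of the improved (optimal) decay estimate (3.12) of Theorem 3.3. -/
theorem optimal_polynomial_decay
    (p : ℝ) (hp : 1 < p)
    (E E' ξ ξ' : ℝ → ℝ) (lam K : ℝ) (hlam : 0 < lam) (hK : 0 < K)
    (hE_nonneg : ∀ t, 0 ≤ t → 0 ≤ E t)
    (hE_deriv : ∀ t, 0 ≤ t → HasDerivAt E (E' t) t)
    (hE_mono : AntitoneOn E (Ici 0))
    (hξ_pos : ∀ t, 0 ≤ t → 0 < ξ t)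
    (hξ_deriv : ∀ t, 0 ≤ t → HasDerivAt ξ (ξ' t) t)
    (hξ_mono : AntitoneOn ξ (Ici 0))
    (hineq : ∀ t, 0 ≤ t →
      ξ t * E' t ≤ -lam * ξ t * E t + K * (-E' t) ^ (1 / p)) :
    ∃ lam₀ > 0, ∀ t, 0 ≤ t →
      E t ≤ lam₀ * (1 + ∫ s in (0 : ℝ)..t, ξ s ^ p) ^ (-(1 / (p - 1))) := by
  have hξ_rpow : ContinuousOn (fun t => ξ t ^ p) (Ici 0) :=
    (HasDerivAt.continuousOn hξ_deriv).rpow_const fun t ht => .inl (hξ_pos t ht).ne'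
  exact optimal_polynomial_decay_general hp hlam hE_nonneg (HasDerivAt.continuousOn hE_deriv)
    (fun t ht => hE_deriv t ht.le) hE_mono (fun t ht => (hξ_pos t ht).le)
    (fun t ht => hξ_mono self_mem_Ici ht.le ht.le)
    (hξ_rpow.locallyIntegrableOn measurableSet_Ici) (fun t ht => hineq t ht.le)
end
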